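/- (Sequential Cramér–Wold with positive-measure directions) Let (P_n) and P be Borel probability measures on ℝ^d (d ≥ 2). Suppose there exist a Borel set A ⊂ 𝕊^{d-1} with σ(A) > 0 and linearly independent vectors u_1,…,u_d ∈ A such that: (H1) for every u ∈ A, π_u(P_n) converges weakly to π_u(P); (H2) for each j, π_{u_j}(P) has finite moments of all orders and satisfies Carleman's condition. Then P_n converges weakly to P. -/

import Mathlib

open MeasureTheory Filter
open scoped InnerProductSpace ENNReal Topology BigOperators

/-- Weak convergence of a sequence of measures: convergence of integrals of all
bounded continuous functions. -/
def WeakTendsto {E : Type*} [MeasurableSpace E] [TopologicalSpace E]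
    (μ : ℕ → Measure E) (ν : Measure E) : Prop :=
  ∀ f : BoundedContinuousFunction E ℝ,
    Tendsto (fun n => ∫ x, f x ∂(μ n)) atTop (𝓝 (∫ x, f x ∂ν))

/-- Carleman's condition for a measure on ℝ: the series of reciprocal (2m)-th
roots of the even absolute moments diverges. -/
def Carleman (ν : Measure ℝ) : Prop :=
  ¬ Summable (fun m : ℕ =>
    (∫ t, |t| ^ (2 * (m + 1)) ∂ν) ^ (-(1 / (2 * (m + 1) : ℝ))))



lemma bang_step {f : ℕ → ℝ → ℂ} {M : ℕ → ℝ} (hM : ∀ n, 0 < M n)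
    (hconv : ∀ n, M (n+1) * M (n+1) ≤ M n * M (n+2))
    (hf : ∀ n x, HasDerivAt (f n) (f (n+1) x) x) (hb : ∀ n x, ‖f n x‖ ≤ M n)
    (N : ℕ) (x h : ℝ) (hh : 0 ≤ h) (hh2 : h ≤ Real.exp (-1) * (M N / M (N+1)))
    (hx : ∀ n ≤ N+1, ‖f n x‖ ≤ Real.exp (n - (N+1 : ℝ)) * M n) :
    ∀ n ≤ N, ‖f n (x+h)‖ ≤ Real.exp (n - (N : ℝ)) * M n := by
  set r := M (N+1) / M N with hr
  have hrpos : 0 < r := div_pos (hM _) (hM _)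
  have hratio : ∀ k ≤ N, M (k+1) ≤ r * M k := by
    intro k hk
    have : ∀ j, M (k+1) / M k ≤ M (k+j+1) / M (k+j) := by
      intro j
      induction j with
      | zero => exact le_rfl
      | succ j ih =>
        refine ih.trans ?_
        rw [div_le_div_iff₀ (hM _) (hM _)]
        have := hconv (k+j)
        rw [show k + (j+1) = k+j+1 by ring]
        linarith
    have h1 := this (N-k)
    rw [show k + (N-k) = N by omega, ← hr, div_le_iff₀ (hM _)] at h1
    exact h1
  have key : ∀ j ≤ N+1, ∀ s ∈ Set.Icc 0 h,
      ‖f (N+1-j) (x+s)‖ ≤ Real.exp (((N+1-j : ℕ) : ℝ) - (N+1 : ℝ)) * M (N+1-j) * Real.exp (Real.exp 1 * r * s) := by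
    intro j
    induction j with
    | zero =>
      intro _ s hs
      have h1 : 1 ≤ Real.exp (Real.exp 1 * r * s) := by
        apply Real.one_le_exp
        have := hs.1
        positivity
      simp only [Nat.sub_zero]
      push_cast
      rw [sub_self, Real.exp_zero, one_mul]
      exact (hb _ _).trans (le_mul_of_one_le_right (hM _).le h1)
    | succ j ih =>
      intro hj s hs
      obtain ⟨n, hn⟩ : ∃ n, n = N+1-(j+1) := ⟨_, rfl⟩
      have hn1 : N+1-j = n+1 := by omega
      rw [hn1] at ih
      rw [← hn]
      have ih := ih (by omega)
      set c := Real.exp ((n : ℝ) - (N+1 : ℝ)) * M n with hc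
      have hder : ∀ s, HasDerivAt (fun s => f n (x+s)) (f (n+1) (x+s)) s := fun s => by
        simpa using (hf n (x+s)).comp_const_add x s
      have hB : ∀ s, HasDerivAt (fun s => c * Real.exp (Real.exp 1 * r * s))
          (c * (Real.exp (Real.exp 1 * r * s) * (Real.exp 1 * r))) s := fun s => by
        have := (((hasDerivAt_id s).const_mul (Real.exp 1 * r)).exp).const_mul c
        simpa using this
      refine image_norm_le_of_norm_deriv_right_le_deriv_boundary
        (f := fun s => f n (x+s)) (f' := fun s => f (n+1) (x+s)) (a := 0) (b := h)
        (B := fun s => c * Real.exp (Real.exp 1 * r * s))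
        (fun s _ => (hder s).continuousAt.continuousWithinAt)
        (fun s _ => (hder s).hasDerivWithinAt) ?_ hB ?_ hs
      · simpa using hx n (by omega)
      · intro s hs
        refine (ih s ⟨hs.1, hs.2.le⟩).trans ?_
        have h2 := hratio n (by omega)
        have h3 : Real.exp (((n+1 : ℕ) : ℝ) - (N+1 : ℝ)) = Real.exp 1 * Real.exp ((n : ℝ) - (N+1 : ℝ)) := by
          rw [← Real.exp_add]; congr 1; push_cast; ring
        rw [h3, hc]
        calc _ ≤ Real.exp 1 * Real.exp ((n : ℝ) - (N+1 : ℝ)) * (r * M n) * Real.exp (Real.exp 1 * r * s) := by gcongr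
          _ = _ := by ring
  intro n hn
  have := key (N+1-n) (by omega) h ⟨hh, le_rfl⟩
  rw [show N+1-(N+1-n) = n by omega] at this
  refine this.trans ?_
  have h4 : Real.exp 1 * r * h ≤ 1 := by
    have : Real.exp 1 * r * h ≤ Real.exp 1 * r * (Real.exp (-1) * (M N / M (N+1))) := by gcongr
    refine this.trans (le_of_eq ?_)
    rw [hr, Real.exp_neg]
    have := (hM N).ne'
    have := (hM (N+1)).ne'
    have := (Real.exp_pos 1).ne'
    field_simp
  have h5 : Real.exp (n - (N : ℝ)) = Real.exp (n - (N+1 : ℝ)) * Real.exp 1 := by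
    rw [← Real.exp_add]; congr 1; ring
  rw [h5]
  calc _ ≤ Real.exp (n - (N+1 : ℝ)) * M n * Real.exp 1 := by
        gcongr; exact mul_nonneg (Real.exp_pos _).le (hM _).le
    _ = _ := by ring

lemma bang {f : ℕ → ℝ → ℂ} {M : ℕ → ℝ} (hM : ∀ n, 0 < M n)
    (hconv : ∀ n, M (n+1) * M (n+1) ≤ M n * M (n+2))
    (hf : ∀ n x, HasDerivAt (f n) (f (n+1) x) x) (hb : ∀ n x, ‖f n x‖ ≤ M n)
    (h0 : ∀ n, f n 0 = 0) (hdiv : ¬ Summable (fun n => M n / M (n+1))) (x : ℝ) (hx : 0 ≤ x) :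
    f 0 x = 0 := by
  have hnn : ∀ n, 0 ≤ Real.exp (-1) * (M n / M (n+1)) := fun n =>
    mul_nonneg (Real.exp_pos _).le (div_nonneg (hM _).le (hM _).le)
  have key : ∀ N j, ∀ y, 0 ≤ y →
      y ≤ ∑ i ∈ Finset.range j, Real.exp (-1) * (M (N+i) / M (N+i+1)) →
      ∀ n ≤ N, ‖f n y‖ ≤ Real.exp (n - (N : ℝ)) * M n := by
    intro N j
    induction j generalizing N with
    | zero =>
      intro y hy hy2 n hn
      simp at hy2
      obtain rfl : y = 0 := le_antisymm hy2 hy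
      rw [h0, norm_zero]
      exact mul_nonneg (Real.exp_pos _).le (hM _).le
    | succ j ih =>
      intro y hy hy2 
      rw [Finset.sum_range_succ'] at hy2
      set δ := Real.exp (-1) * (M (N+0) / M (N+0+1)) with hδ
      have hδ0 : 0 ≤ δ := hnn _
      have e : y = max (y - δ) 0 + (y - max (y-δ) 0) := by ring
      rw [e]
      refine bang_step hM hconv hf hb N _ _ ?_ ?_ ?_
      · rcases max_cases (y-δ) 0 with h | h <;> linarith
      · simp only [add_zero] at hδ
        rw [← hδ]
        have := le_max_left (y-δ) 0
        linarith
      · have := ih (N+1) (max (y-δ) 0) (le_max_right _ _) ?_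
        · simpa using this
        · apply max_le
          · have e2 : ∀ i, N+1+i = N+(i+1) := fun i => by ring
            simp only [e2]
            linarith
          · exact Finset.sum_nonneg fun i _ => hnn _
  have lim : ∀ N : ℕ, ‖f 0 x‖ ≤ Real.exp (-(N : ℝ)) * M 0 := by
    intro N
    have hdiv2 : ¬ Summable (fun i => Real.exp (-1) * (M (N+i) / M (N+i+1))) := by
      rw [summable_mul_left_iff (Real.exp_pos _).ne']
      intro h
      apply hdiv
      rw [← summable_nat_add_iff N]
      have e : ∀ i, i + N = N + i := fun i => add_comm _ _
      simpa only [e] using h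
    have := (not_summable_iff_tendsto_nat_atTop_of_nonneg (fun i => hnn (N+i))).1 hdiv2
    obtain ⟨j, hj⟩ := (this.eventually_ge_atTop x).exists
    have := key N j x hx hj 0 (by omega)
    simpa using this
  have ht : Tendsto (fun N : ℕ => Real.exp (-(N : ℝ)) * M 0) atTop (𝓝 0) := by
    have := (Real.tendsto_exp_neg_atTop_nhds_zero.comp (tendsto_natCast_atTop_atTop (R := ℝ))).mul_const (M 0)
    simpa using this
  exact norm_le_zero_iff.1 (ge_of_tendsto' ht lim)

lemma carleman_ineq {a : ℕ → ℝ} (ha : ∀ n, 0 < a n) (hs : Summable a) :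
    Summable (fun n : ℕ => (∏ i ∈ Finset.range (n+1), a i) ^ (1 / ((n:ℝ)+1))) := by
  set c : ℕ → ℝ := fun i => ((i:ℝ)+2)^(i+1) / ((i:ℝ)+1)^i with hc
  have hcpos : ∀ i, 0 < c i := fun i => by positivity
  have hprod : ∀ n : ℕ, ∏ i ∈ Finset.range n, c i = ((n:ℝ)+1)^n := by
    intro n
    induction n with
    | zero => simp
    | succ n ih =>
      rw [Finset.prod_range_succ, ih, hc]
      push_cast
      field_simp
      ring
  set S : ℕ → ℝ := fun n => ∑ i ∈ Finset.range n, c i * a i with hS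
  have hSnn : ∀ n, 0 ≤ S n := fun n => Finset.sum_nonneg fun i _ => (mul_pos (hcpos i) (ha i)).le
  have hG : ∀ n : ℕ, (∏ i ∈ Finset.range (n+1), a i) ^ (1 / ((n:ℝ)+1)) ≤
      S (n+1) / (((n:ℝ)+1)*((n:ℝ)+2)) := by
    intro n
    have h1 := Real.geom_mean_le_arith_mean (Finset.range (n+1)) (fun _ => 1) (fun i => c i * a i)
      (by simp) (by simp; positivity) (fun i _ => (mul_pos (hcpos i) (ha i)).le)
    simp only [Real.rpow_one, Finset.sum_const, Finset.card_range, nsmul_eq_mul, mul_one, one_mul] at h1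
    rw [Finset.prod_mul_distrib, hprod, Real.mul_rpow (by positivity) (Finset.prod_nonneg fun i _ => (ha i).le)] at h1
    have h2 : ((((n+1:ℕ):ℝ)+1)^(n+1)) ^ (((n+1:ℕ):ℝ)⁻¹) = (n:ℝ)+2 := by
      rw [Real.pow_rpow_inv_natCast (by positivity) (by omega)]
      push_cast; ring
    rw [h2] at h1
    push_cast at h1
    rw [one_div, div_mul_eq_div_div, le_div_iff₀ (by positivity), mul_comm]
    exact h1
  have hid : ∀ N : ℕ, ∑ n ∈ Finset.range N, S (n+1) / (((n:ℝ)+1)*((n:ℝ)+2)) + S N / ((N:ℝ)+1)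
      = ∑ i ∈ Finset.range N, c i * a i / ((i:ℝ)+1) := by
    intro N
    induction N with
    | zero => simp [hS]
    | succ N ih =>
      rw [Finset.sum_range_succ, Finset.sum_range_succ, ← ih]
      have : S (N+1) = S N + c N * a N := by simp [hS, Finset.sum_range_succ]
      rw [this]
      push_cast
      field_simp
      ring
  have hce : ∀ i : ℕ, c i * a i / ((i:ℝ)+1) ≤ Real.exp 1 * a i := by
    intro i
    have h1 : c i / ((i:ℝ)+1) = (1 + 1/((i:ℝ)+1))^(i+1) := by
      rw [hc]
      have : 1 + 1/((i:ℝ)+1) = ((i:ℝ)+2)/((i:ℝ)+1) := by field_simp; ring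
      rw [this, div_pow]
      field_simp
      ring
    have h2 : (1 + 1/((i:ℝ)+1))^(i+1) ≤ Real.exp 1 := by
      have := Real.add_one_le_exp (1/((i:ℝ)+1))
      calc _ ≤ (Real.exp (1/((i:ℝ)+1)))^(i+1) := by
            gcongr; linarith
        _ = Real.exp 1 := by
            rw [← Real.exp_nat_mul]; congr 1; push_cast; field_simp
    calc _ = c i / ((i:ℝ)+1) * a i := by ring
      _ ≤ _ := by rw [h1]; gcongr; exact (ha i).le
  refine summable_of_sum_range_le (c := ∑' i, Real.exp 1 * a i)
    (fun n => Real.rpow_nonneg (Finset.prod_nonneg fun i _ => (ha i).le) _) fun N => ?_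
  calc _ ≤ ∑ n ∈ Finset.range N, S (n+1) / (((n:ℝ)+1)*((n:ℝ)+2)) := Finset.sum_le_sum fun n _ => hG n
    _ ≤ _ := by rw [← hid N]; have := hSnn N; exact le_add_of_nonneg_right (by positivity)
    _ ≤ ∑ i ∈ Finset.range N, Real.exp 1 * a i := Finset.sum_le_sum fun i _ => hce i
    _ ≤ _ := (hs.mul_left _).sum_le_tsum _ fun i _ => (mul_pos (Real.exp_pos _) (ha i)).le

lemma mvpoly_ae_ne {n : ℕ} (p : MvPolynomial (Fin n) ℝ) (hp : p ≠ 0) :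
    volume {x : Fin n → ℝ | MvPolynomial.eval x p = 0} = 0 := by
  induction n with
  | zero =>
    have : {x : Fin 0 → ℝ | MvPolynomial.eval x p = 0} = ∅ := by
      ext x
      simp only [Set.mem_ofPred_eq, Set.mem_empty_iff_false, iff_false]
      intro h
      apply hp
      apply MvPolynomial.funext
      intro y
      rw [Subsingleton.elim y x, h, map_zero]
    rw [this, measure_empty]
  | succ n ih =>
    have hmeas : MeasurableSet {x : Fin (n+1) → ℝ | MvPolynomial.eval x p = 0} :=
      (isClosed_eq (MvPolynomial.continuous_eval p) continuous_const).measurableSet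
    have hmp := (volume_preserving_piFinSuccAbove (fun _ : Fin (n + 1) => ℝ) 0).symm
    have hmp2 := hmp.comp (Measure.measurePreserving_swap (μ := (volume : Measure (Fin n → ℝ)))
      (ν := (volume : Measure ℝ)))
    rw [← hmp2.measure_preimage hmeas.nullMeasurableSet]
    rw [Measure.measure_prod_null (hmp2.measurable hmeas)]
    obtain ⟨k, hk⟩ : ∃ k, (MvPolynomial.finSuccEquiv ℝ n p).coeff k ≠ 0 := by
      by_contra! h
      apply hp
      have : MvPolynomial.finSuccEquiv ℝ n p = 0 := Polynomial.ext fun k => by simpa using h k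
      simpa using this
    have hae : ∀ᵐ s : Fin n → ℝ, MvPolynomial.eval s ((MvPolynomial.finSuccEquiv ℝ n p).coeff k) ≠ 0 := by
      rw [ae_iff]
      simpa using ih _ hk
    filter_upwards [hae] with s hs
    have hne : Polynomial.map (MvPolynomial.eval s) (MvPolynomial.finSuccEquiv ℝ n p) ≠ 0 := by
      intro h
      apply hs
      have := congrArg (fun q => Polynomial.coeff q k) h
      simpa [Polynomial.coeff_map] using this
    refine Set.Finite.measure_zero (Set.Finite.subset (Polynomial.finite_setOfPred_isRoot hne) ?_) _
    intro y hy
    have hy' : MvPolynomial.eval (Fin.cons y s : Fin (n+1) → ℝ) p = 0 := by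
      simpa [MeasurableEquiv.piFinSuccAbove, Fin.consEquiv, Fin.insertNthEquiv] using hy
    rw [MvPolynomial.eval_eq_eval_mv_eval'] at hy'
    exact hy'

lemma mvpoly_dehom {n : ℕ} (p : MvPolynomial (Fin (n+1)) ℝ) (hp : p ≠ 0) (m : ℕ)
    (hh : ∀ (c : ℝ) x, MvPolynomial.eval (c • x) p = c^m * MvPolynomial.eval x p) (j : Fin (n+1)) :
    volume {y : Fin n → ℝ | MvPolynomial.eval (j.insertNth (1:ℝ) y : Fin (n+1) → ℝ) p = 0} = 0 := by
  set q : MvPolynomial (Fin n) ℝ :=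
    MvPolynomial.aeval (j.insertNth 1 MvPolynomial.X : Fin (n+1) → MvPolynomial (Fin n) ℝ) p with hq
  have hev : ∀ y : Fin n → ℝ, MvPolynomial.eval y q = MvPolynomial.eval (j.insertNth (1:ℝ) y : Fin (n+1) → ℝ) p := by
    intro y
    rw [hq]
    rw [← MvPolynomial.coe_aeval_eq_eval, RingHom.coe_coe, ← AlgHom.comp_apply, MvPolynomial.comp_aeval,
      ← MvPolynomial.coe_aeval_eq_eval, RingHom.coe_coe]
    congr 2
    ext i
    refine Fin.succAboveCases j ?_ (fun i => ?_) i <;> simp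
  have hq0 : q ≠ 0 := by
    intro h
    have : MvPolynomial.X j * p = 0 := by
      apply MvPolynomial.funext
      intro x
      simp only [map_mul, MvPolynomial.eval_X, map_zero, mul_eq_zero]
      by_cases hx : x j = 0
      · exact Or.inl hx
      · right
        have h1 : x = x j • (j.insertNth (1:ℝ) (fun i => x (j.succAbove i) / x j) : Fin (n+1) → ℝ) := by
          ext i
          refine Fin.succAboveCases j ?_ (fun i => ?_) i
          · simp
          · simp; field_simp
        rw [h1, hh, ← hev, h]; simp
    rcases mul_eq_zero.1 this with h | h
    · exact MvPolynomial.X_ne_zero j h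
    · exact hp h
  simpa only [hev] using mvpoly_ae_ne q hq0

lemma normalize_lip {E : Type*} [NormedAddCommGroup E] [NormedSpace ℝ E] (a b : E) (ha : 1 ≤ ‖a‖) (hb : 1 ≤ ‖b‖) :
    ‖‖a‖⁻¹ • a - ‖b‖⁻¹ • b‖ ≤ 2 * ‖a - b‖ := by
  have e : ‖a‖⁻¹ • a - ‖b‖⁻¹ • b = ‖a‖⁻¹ • (a - b) + (‖a‖⁻¹ - ‖b‖⁻¹) • b := by
    module
  have h1 : ‖a‖⁻¹ ≤ 1 := inv_le_one_of_one_le₀ ha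
  have hb0 : 0 < ‖b‖ := by linarith
  have ha0 : 0 < ‖a‖ := by linarith
  have h2 : |‖a‖⁻¹ - ‖b‖⁻¹| * ‖b‖ = ‖a‖⁻¹ * |‖b‖ - ‖a‖| := by
    have : ‖a‖⁻¹ - ‖b‖⁻¹ = ‖a‖⁻¹ * ‖b‖⁻¹ * (‖b‖ - ‖a‖) := by field_simp
    rw [this, abs_mul, abs_of_pos (by positivity)]
    field_simp
  have h3 : |‖b‖ - ‖a‖| ≤ ‖a - b‖ := by rw [abs_sub_comm]; exact abs_norm_sub_norm_le a b
  rw [e]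
  refine (norm_add_le _ _).trans ?_
  rw [norm_smul, norm_smul, Real.norm_eq_abs, Real.norm_eq_abs, h2, abs_of_pos (by positivity)]
  have := mul_le_mul h1 h3 (abs_nonneg _) zero_le_one
  have := mul_le_mul_of_nonneg_right h1 (norm_nonneg (a-b))
  linarith

lemma hausdorff_null {n : ℕ} (p : MvPolynomial (Fin (n+1)) ℝ) (hp : p ≠ 0) (m : ℕ)
    (hh : ∀ (c : ℝ) x, MvPolynomial.eval (c • x) p = c^m * MvPolynomial.eval x p)
    (A : Set (EuclideanSpace ℝ (Fin (n+1)))) (hAs : A ⊆ Metric.sphere 0 1)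
    (hA : ∀ v ∈ A, MvPolynomial.eval (fun i => v i) p = 0) :
    μH[(n : ℝ)] A = 0 := by
  set z : Fin (n+1) → (Fin n → ℝ) → EuclideanSpace ℝ (Fin (n+1)) := fun j y =>
    WithLp.toLp 2 (j.insertNth (1:ℝ) y : Fin (n+1) → ℝ) with hz
  have hz1 : ∀ j y, 1 ≤ ‖z j y‖ := by
    intro j y
    have := PiLp.norm_apply_le (z j y) j
    simpa [hz] using this
  set F : Fin (n+1) → ℝ → (Fin n → ℝ) → EuclideanSpace ℝ (Fin (n+1)) := fun j s y =>
    s • (‖z j y‖⁻¹ • z j y) with hF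
  have hlip : ∀ j s, ∃ K, LipschitzWith K (F j s) := by
    intro j s
    obtain ⟨K, hK⟩ : ∃ K, LipschitzWith K (z j) := by
      refine ⟨_, (PiLp.lipschitzWith_toLp 2 (fun _ : Fin (n+1) => ℝ)).comp
        (LipschitzWith.of_dist_le_mul (K := 1) fun x y => ?_)⟩
      rw [NNReal.coe_one, one_mul, dist_pi_le_iff dist_nonneg]
      intro i
      refine Fin.succAboveCases j ?_ (fun i => ?_) i
      · simp
      · simpa using dist_le_pi_dist x y i
    refine ⟨‖s‖₊ * (2 * K), LipschitzWith.of_dist_le_mul fun x y => ?_⟩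
    rw [hF]
    simp only
    rw [dist_smul₀, dist_eq_norm]
    push_cast
    rw [mul_assoc]
    gcongr
    refine (normalize_lip _ _ (hz1 _ _) (hz1 _ _)).trans ?_
    rw [mul_assoc, ← dist_eq_norm]
    have := hK.dist_le_mul x y
    gcongr
  have hcover : A ⊆ ⋃ j : Fin (n+1), (F j 1 '' {y | MvPolynomial.eval (j.insertNth (1:ℝ) y : Fin (n+1) → ℝ) p = 0} ∪
      F j (-1) '' {y | MvPolynomial.eval (j.insertNth (1:ℝ) y : Fin (n+1) → ℝ) p = 0}) := by
    intro v hv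
    have hv1 : ‖v‖ = 1 := by simpa using hAs hv
    obtain ⟨j, hj⟩ : ∃ j, v j ≠ 0 := by
      by_contra! h
      have : v = 0 := by ext i; simpa using h i
      rw [this, norm_zero] at hv1
      exact zero_ne_one hv1
    set y : Fin n → ℝ := fun i => v (j.succAbove i) / v j with hy
    have hzy : z j y = (v j)⁻¹ • v := by
      ext i
      refine Fin.succAboveCases j ?_ (fun i => ?_) i
      · simp [hz, hj]
      · simp [hz, hy]; field_simp
    have hy0 : MvPolynomial.eval (j.insertNth (1:ℝ) y : Fin (n+1) → ℝ) p = 0 := by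
      have : (j.insertNth (1:ℝ) y : Fin (n+1) → ℝ) = (v j)⁻¹ • (fun i => v i) := by
        ext i
        have := congrArg (fun w : EuclideanSpace ℝ (Fin (n+1)) => w i) hzy
        simpa [hz] using this
      rw [this, hh, hA v hv, mul_zero]
    refine Set.mem_iUnion.2 ⟨j, ?_⟩
    rcases lt_or_gt_of_ne hj with h | h
    · right
      refine ⟨y, hy0, ?_⟩
      simp only [hF, hzy, norm_smul, hv1, norm_inv, Real.norm_eq_abs, abs_of_neg h, smul_smul]
      have : (-1 * ((-v j)⁻¹ * 1)⁻¹ * (v j)⁻¹) = 1 := by field_simp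
      rw [this, one_smul]
    · left
      refine ⟨y, hy0, ?_⟩
      simp only [hF, hzy, norm_smul, hv1, norm_inv, Real.norm_eq_abs, abs_of_pos h, smul_smul]
      have : (1 * ((v j)⁻¹ * 1)⁻¹ * (v j)⁻¹) = 1 := by field_simp
      rw [this, one_smul]
  have hvol : (μH[(n:ℝ)] : Measure (Fin n → ℝ)) = volume := by
    have := hausdorffMeasure_pi_real (ι := Fin n)
    simpa using this
  have himg : ∀ j s, μH[(n : ℝ)] (F j s '' {y | MvPolynomial.eval (j.insertNth (1:ℝ) y : Fin (n+1) → ℝ) p = 0}) = 0 := by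
    intro j s
    obtain ⟨K, hK⟩ := hlip j s
    have := hK.hausdorffMeasure_image_le (d := n) (by positivity) {y | MvPolynomial.eval (j.insertNth (1:ℝ) y : Fin (n+1) → ℝ) p = 0}
    rw [hvol, mvpoly_dehom p hp m hh j, mul_zero] at this
    exact le_antisymm this zero_le
  refine measure_mono_null hcover ?_
  rw [measure_iUnion_null_iff]
  intro j
  exact measure_union_null (himg j 1) (himg j (-1))
lemma bang' {f : ℕ → ℝ → ℂ} {M : ℕ → ℝ} (hM : ∀ n, 0 < M n)
    (hconv : ∀ n, M (n+1) * M (n+1) ≤ M n * M (n+2))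
    (hf : ∀ n x, HasDerivAt (f n) (f (n+1) x) x) (hb : ∀ n x, ‖f n x‖ ≤ M n)
    (h0 : ∀ n, f n 0 = 0) (hdiv : ¬ Summable (fun n => M n / M (n+1))) (x : ℝ) :
    f 0 x = 0 := by
  rcases le_total 0 x with hx | hx
  · exact bang hM hconv hf hb h0 hdiv x hx
  · have := bang (f := fun n x => (-1)^n * f n (-x)) hM hconv ?_ ?_ ?_ hdiv (-x) (by linarith)
    · simpa using this
    · intro n x
      have h1 := ((hf n (-x)).scomp x (hasDerivAt_neg x)).const_mul ((-1:ℂ)^n)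
      have h2 : (-1:ℂ)^n * ((-1:ℝ) • f (n+1) (-x)) = (-1)^(n+1) * f (n+1) (-x) := by
        rw [pow_succ]; simp
      rw [← h2]
      exact h1
    · intro n x; simpa using hb n (-x)
    · intro n; simp [h0]

lemma cs_sqrt {E : Type*} [MeasurableSpace E] {μ : Measure E} {f g : E → ℝ} (hf0 : ∀ x, 0 ≤ f x)
    (hg0 : ∀ x, 0 ≤ g x) (hf : MemLp f 2 μ) (hg : MemLp g 2 μ) :
    ∫ x, f x * g x ∂μ ≤ √(∫ x, f x ^ 2 ∂μ) * √(∫ x, g x ^ 2 ∂μ) := by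
  have := integral_mul_le_Lp_mul_Lq_of_nonneg (μ := μ) (p := 2) (q := 2) Real.HolderConjugate.two_two
    (f := f) (g := g) (Eventually.of_forall hf0) (Eventually.of_forall hg0) (by simpa using hf) (by simpa using hg)
  simpa [Real.sqrt_eq_rpow] using this

section
variable {E : Type*} [MeasurableSpace E] {μ : Measure E} {y : E → ℝ} {G : E → ℂ}

lemma memLp_abs_pow (hym : Measurable y)
    (hy : ∀ n : ℕ, Integrable (fun x => |y x|^n) μ) (n : ℕ) : MemLp (fun x => |y x|^n) 2 μ := by
  rw [memLp_two_iff_integrable_sq (by fun_prop)]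
  simpa [← pow_mul] using hy (n*2)

lemma int_abs_pow_mul (hym : Measurable y)
    (hy : ∀ n : ℕ, Integrable (fun x => |y x|^n) μ) (hG : MemLp G 2 μ) (n : ℕ) :
    Integrable (fun x => |y x|^n * ‖G x‖) μ :=
  (memLp_abs_pow hym hy n).integrable_mul hG.norm

lemma ft_norm {E : Type*} {y : E → ℝ} {G : E → ℂ} (n : ℕ) (t : ℝ) (x : E) :
    ‖(Complex.I * y x)^n * Complex.exp (t * y x * Complex.I) * G x‖ = |y x|^n * ‖G x‖ := by
  have : ‖Complex.exp (t * y x * Complex.I)‖ = 1 := by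
    rw [← Complex.ofReal_mul]; exact Complex.norm_exp_ofReal_mul_I _
  simp [this]

lemma ft_meas (hym : Measurable y) (hG : MemLp G 2 μ) (n : ℕ) (t : ℝ) :
    AEStronglyMeasurable (fun x => (Complex.I * y x)^n * Complex.exp (t * y x * Complex.I) * G x) μ := by
  have : Measurable (fun x => (Complex.I * y x)^n * Complex.exp (t * y x * Complex.I)) := by fun_prop
  exact this.aestronglyMeasurable.mul hG.1

lemma ft_int (hym : Measurable y)
    (hy : ∀ n : ℕ, Integrable (fun x => |y x|^n) μ) (hG : MemLp G 2 μ) (n : ℕ) (t : ℝ) :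
    Integrable (fun x => (Complex.I * y x)^n * Complex.exp (t * y x * Complex.I) * G x) μ :=
  (int_abs_pow_mul hym hy hG n).mono' (ft_meas hym hG n t)
    (Eventually.of_forall fun x => (ft_norm n t x).le)

lemma ft_deriv (hym : Measurable y)
    (hy : ∀ n : ℕ, Integrable (fun x => |y x|^n) μ) (hG : MemLp G 2 μ) (n : ℕ) (t : ℝ) :
    HasDerivAt (fun t : ℝ => ∫ x, (Complex.I * y x)^n * Complex.exp (t * y x * Complex.I) * G x ∂μ)
      (∫ x, (Complex.I * y x)^(n+1) * Complex.exp (t * y x * Complex.I) * G x ∂μ) t := by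
  refine (hasDerivAt_integral_of_dominated_loc_of_deriv_le (s := Set.univ)
    (F' := fun t x => (Complex.I * y x)^(n+1) * Complex.exp (t * y x * Complex.I) * G x)
    (bound := fun x => |y x|^(n+1) * ‖G x‖) univ_mem
    (Eventually.of_forall fun t => ft_meas hym hG n t) (ft_int hym hy hG n t)
    (ft_meas hym hG (n+1) t) (Eventually.of_forall fun x t _ => (ft_norm (n+1) t x).le)
    (int_abs_pow_mul hym hy hG (n+1)) (Eventually.of_forall fun x t _ => ?_)).2
  have h1 : HasDerivAt (fun t : ℝ => (t:ℂ) * y x * Complex.I) (1 * y x * Complex.I) t :=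
    ((Complex.ofRealCLM.hasDerivAt (x := t)).mul_const (y x : ℂ)).mul_const Complex.I
  have h2 := (h1.cexp.const_mul ((Complex.I * y x)^n)).mul_const (G x)
  have e : Complex.exp (t * y x * Complex.I) * (1 * y x * Complex.I) =
      (Complex.I * y x) * Complex.exp (t * y x * Complex.I) := by ring
  rw [e, ← mul_assoc, ← pow_succ] at h2
  exact h2

lemma ft_bound (hym : Measurable y)
    (hy : ∀ n : ℕ, Integrable (fun x => |y x|^n) μ) (hG : MemLp G 2 μ) (n : ℕ) (t : ℝ) :
    ‖∫ x, (Complex.I * y x)^n * Complex.exp (t * y x * Complex.I) * G x ∂μ‖ ≤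
      √(∫ x, |y x|^(2*n) ∂μ) * √(∫ x, ‖G x‖^2 ∂μ) := by
  refine (norm_integral_le_integral_norm _).trans ?_
  simp only [ft_norm]
  have := cs_sqrt (μ := μ) (f := fun x => |y x|^n) (g := fun x => ‖G x‖) (fun x => by positivity) (fun x => by positivity)
    (memLp_abs_pow hym hy n) hG.norm
  simpa [← pow_mul, mul_comm n 2] using this

lemma mom_conv (hym : Measurable y)
    (hy : ∀ n : ℕ, Integrable (fun x => |y x|^n) μ) (n : ℕ) :
    ∫ x, |y x|^(2*(n+1)) ∂μ ≤ √(∫ x, |y x|^(2*n) ∂μ) * √(∫ x, |y x|^(2*(n+2)) ∂μ) := by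
  have := cs_sqrt (μ := μ) (f := fun x => |y x|^n) (g := fun x => |y x|^(n+2)) (fun x => by positivity) (fun x => by positivity)
    (memLp_abs_pow hym hy n) (memLp_abs_pow hym hy (n+2))
  simp only [← pow_mul, ← pow_add] at this
  have e1 : n + (n+2) = 2*(n+1) := by ring
  rw [e1, mul_comm n 2, mul_comm (n+2) 2] at this
  exact this
end

lemma carleman_step {E : Type*} [MeasurableSpace E] {P Q : Measure E} [IsProbabilityMeasure P]
    [IsProbabilityMeasure Q] {y : E → ℝ} {G : E → ℂ} (hym : Measurable y)
    (hyP : ∀ n : ℕ, Integrable (fun x => |y x|^n) P) (hyQ : ∀ n : ℕ, Integrable (fun x => |y x|^n) Q)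
    (hGP : MemLp G 2 P) (hGQ : MemLp G 2 Q)
    (hmom : ∀ n : ℕ, ∫ x, |y x|^n ∂P = ∫ x, |y x|^n ∂Q)
    (hcar : ¬ Summable (fun m : ℕ => (∫ x, |y x| ^ (2 * (m + 1)) ∂P) ^ (-(1 / (2 * (m + 1) : ℝ)))))
    (heq : ∀ n : ℕ, ∫ x, (y x : ℂ)^n * G x ∂P = ∫ x, (y x : ℂ)^n * G x ∂Q) (t : ℝ) :
    ∫ x, Complex.exp (t * y x * Complex.I) * G x ∂P = ∫ x, Complex.exp (t * y x * Complex.I) * G x ∂Q := by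
  set s : ℕ → ℝ := fun n => ∫ x, |y x|^(2*n) ∂P with hs
  have hs0 : s 0 = 1 := by simp [hs]
  have hspos : ∀ n, 0 < s n := by
    intro n
    refine lt_of_le_of_ne (integral_nonneg fun x => by positivity) fun h => hcar ?_
    have hn : n ≠ 0 := by rintro rfl; rw [hs0] at h; exact zero_ne_one h
    have h1 := (integral_eq_zero_iff_of_nonneg (fun x => by positivity) (hyP (2*n))).1 h.symm
    have h2 : ∀ m : ℕ, ∫ x, |y x| ^ (2 * (m + 1)) ∂P = 0 := by
      intro m
      rw [integral_eq_zero_iff_of_nonneg (fun x => by positivity) (hyP _)]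
      filter_upwards [h1] with x hx
      have : |y x| = 0 := by
        simp only [Pi.zero_apply] at hx
        exact eq_zero_of_pow_eq_zero hx
      simp [this]
    have h3 : ∀ m : ℕ, (0:ℝ) ^ (-(1 / (2 * (m + 1) : ℝ))) = 0 := fun m =>
      Real.zero_rpow (by have : (0:ℝ) < 1 / (2 * (m+1)) := by positivity
                         linarith)
    simp only [h2, h3]
    exact summable_zero
  set C := √(∫ x, ‖G x‖^2 ∂P) + √(∫ x, ‖G x‖^2 ∂Q) + 1 with hC
  have hCpos : 0 < C := by positivity
  set f : ℕ → ℝ → ℂ := fun n t =>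
    (∫ x, (Complex.I * y x)^n * Complex.exp (t * y x * Complex.I) * G x ∂P) -
    (∫ x, (Complex.I * y x)^n * Complex.exp (t * y x * Complex.I) * G x ∂Q) with hf
  have main := bang' (f := f) (M := fun n => C * √(s n)) ?_ ?_ ?_ ?_ ?_ ?_ t
  · simpa [hf, sub_eq_zero] using main
  · intro n; exact mul_pos hCpos (Real.sqrt_pos.2 (hspos n))
  · intro n
    have h1 := mom_conv hym hyP n
    have h2 : √(s (n+1)) * √(s (n+1)) = s (n+1) := Real.mul_self_sqrt (hspos _).le
    have h3 : C * C * s (n+1) ≤ C * C * (√(s n) * √(s (n+2))) := by gcongr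
    calc _ = C * C * (√(s (n+1)) * √(s (n+1))) := by ring
      _ ≤ _ := by rw [h2]; refine h3.trans (le_of_eq (by ring))
  · intro n x
    exact (ft_deriv hym hyP hGP n x).sub (ft_deriv hym hyQ hGQ n x)
  · intro n x
    have h1 := ft_bound hym hyP hGP n x
    have h2 := ft_bound hym hyQ hGQ n x
    rw [← hmom] at h2
    have h3 := norm_sub_le (∫ z, (Complex.I * y z)^n * Complex.exp (x * y z * Complex.I) * G z ∂P)
      (∫ z, (Complex.I * y z)^n * Complex.exp (x * y z * Complex.I) * G z ∂Q)
    have h4 : 0 ≤ √(s n) := Real.sqrt_nonneg _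
    change _ ≤ √(s n) * _ at h1
    change _ ≤ √(s n) * _ at h2
    refine h3.trans ?_
    rw [hC]
    nlinarith
  · intro n
    simp only [hf, sub_eq_zero, Complex.ofReal_zero, zero_mul, Complex.exp_zero, one_mul, mul_pow, mul_assoc]
    rw [integral_const_mul, integral_const_mul, heq]
  · intro hsum
    apply hcar
    have h1 : Summable (fun n => √(s n) / √(s (n+1))) := by
      convert hsum using 2 with n
      rw [mul_div_mul_left _ _ hCpos.ne']
    have h2 := carleman_ineq (fun n => div_pos (Real.sqrt_pos.2 (hspos n)) (Real.sqrt_pos.2 (hspos (n+1)))) h1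
    convert h2 using 2 with n
    have h3 : ∀ n, ∏ i ∈ Finset.range n, √(s i) / √(s (i+1)) = (√(s n))⁻¹ := by
      intro n
      induction n with
      | zero => simp [hs0]
      | succ n ih =>
        rw [Finset.prod_range_succ, ih]
        have := (Real.sqrt_pos.2 (hspos n)).ne'
        field_simp
    rw [h3, Real.sqrt_eq_rpow, ← Real.rpow_neg (hspos _).le, ← Real.rpow_mul (hspos _).le]
    congr 1
    field_simp
section
variable {d : ℕ} {μ : Measure (EuclideanSpace ℝ (Fin d))}

noncomputable def coordMap (u : Fin d → EuclideanSpace ℝ (Fin d)) :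
    EuclideanSpace ℝ (Fin d) →ₗ[ℝ] (Fin d → ℝ) :=
  LinearMap.pi fun j => (innerSL ℝ (u j)).toLinearMap

lemma coordMap_apply (u : Fin d → EuclideanSpace ℝ (Fin d)) (x : EuclideanSpace ℝ (Fin d)) (j : Fin d) :
    coordMap u x j = ⟪u j, x⟫_ℝ := rfl

lemma span_top {u : Fin d → EuclideanSpace ℝ (Fin d)} (hu : LinearIndependent ℝ u) :
    Submodule.span ℝ (Set.range u) = ⊤ :=
  hu.span_eq_top_of_card_eq_finrank' (by simp)

lemma exists_coeff {u : Fin d → EuclideanSpace ℝ (Fin d)} (hu : LinearIndependent ℝ u)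
    (w : EuclideanSpace ℝ (Fin d)) : ∃ c : Fin d → ℝ, ∑ j, c j • u j = w := by
  have : w ∈ Submodule.span ℝ (Set.range u) := by rw [span_top hu]; trivial
  exact (Submodule.mem_span_range_iff_exists_fun ℝ).1 this

lemma coordMap_ker {u : Fin d → EuclideanSpace ℝ (Fin d)} (hu : LinearIndependent ℝ u) :
    LinearMap.ker (coordMap u) = ⊥ := by
  rw [LinearMap.ker_eq_bot']
  intro x hx
  obtain ⟨c, hc⟩ := exists_coeff hu x
  have h1 : ⟪x, x⟫_ℝ = 0 := by
    nth_rewrite 1 [← hc]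
    rw [sum_inner]
    refine Finset.sum_eq_zero fun j _ => ?_
    rw [real_inner_smul_left, ← coordMap_apply, hx]; simp
  exact inner_self_eq_zero.1 h1

lemma norm_moments [IsFiniteMeasure μ] {u : Fin d → EuclideanSpace ℝ (Fin d)} (hu : LinearIndependent ℝ u)
    (h : ∀ j, ∀ n : ℕ, Integrable (fun x => |⟪u j, x⟫_ℝ|^n) μ) (n : ℕ) :
    Integrable (fun x => ‖x‖^n) μ := by
  obtain ⟨K, hK, hT⟩ := (coordMap u).exists_antilipschitzWith (coordMap_ker hu)
  have hb : ∀ x, ‖x‖ ≤ K * ‖coordMap u x‖ := fun x => by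
    have := hT.le_mul_dist x 0
    simpa using this
  have h1 : Integrable (fun x => (K:ℝ)^n * (1 + ∑ j, |⟪u j, x⟫_ℝ|^n)) μ :=
    Integrable.const_mul (Integrable.add (integrable_const _) (integrable_finsetSum _ fun j _ => h j n)) _
  refine h1.mono' (by fun_prop) (Eventually.of_forall fun x => ?_)
  rw [norm_pow, norm_norm]
  refine (pow_le_pow_left₀ (norm_nonneg _) (hb x) n).trans ?_
  rw [mul_pow]
  gcongr
  rcases isEmpty_or_nonempty (Fin d) with hd | hd
  · have : coordMap u x = 0 := Subsingleton.elim _ _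
    rw [this, norm_zero]
    have h2 : (0:ℝ)^n ≤ 1 := pow_le_one₀ le_rfl zero_le_one
    have h3 : 0 ≤ ∑ j, |⟪u j, x⟫_ℝ|^n := Finset.sum_nonneg fun j _ => by positivity
    linarith
  · obtain ⟨j, hj⟩ := Finite.exists_max (fun j => ‖coordMap u x j‖)
    have h2 : ‖coordMap u x‖ ≤ |⟪u j, x⟫_ℝ| :=
      (pi_norm_le_iff_of_nonneg (abs_nonneg _)).2 fun i => hj i
    have h3 := Finset.single_le_sum (f := fun j => |⟪u j, x⟫_ℝ|^n) (fun j _ => by positivity) (Finset.mem_univ j)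
    have h4 := pow_le_pow_left₀ (norm_nonneg _) h2 n
    linarith

lemma poly_bound (p : MvPolynomial (Fin d) ℝ) : ∃ (C : ℝ) (N : ℕ), 0 ≤ C ∧
    ∀ x : EuclideanSpace ℝ (Fin d), |MvPolynomial.eval (fun i => x i) p| ≤ C * (1 + ‖x‖)^N := by
  induction p using MvPolynomial.induction_on with
  | C a => exact ⟨|a|, 0, abs_nonneg _, fun x => by simp⟩
  | add p q hp hq =>
    obtain ⟨C, N, hC, h⟩ := hp
    obtain ⟨C', N', hC', h'⟩ := hq
    refine ⟨C + C', N + N', add_nonneg hC hC', fun x => ?_⟩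
    rw [map_add]
    have h1 : (1:ℝ) ≤ 1 + ‖x‖ := by linarith [norm_nonneg x]
    have h2 : (1 + ‖x‖)^N ≤ (1 + ‖x‖)^(N+N') := pow_le_pow_right₀ h1 (by omega)
    have h3 : (1 + ‖x‖)^N' ≤ (1 + ‖x‖)^(N+N') := pow_le_pow_right₀ h1 (by omega)
    have h4 := mul_le_mul_of_nonneg_left h2 hC
    have h5 := mul_le_mul_of_nonneg_left h3 hC'
    have := abs_add_le (MvPolynomial.eval (fun i => x i) p) (MvPolynomial.eval (fun i => x i) q)
    linarith [h x, h' x]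
  | mul_X p i hp =>
    obtain ⟨C, N, hC, h⟩ := hp
    refine ⟨C, N+1, hC, fun x => ?_⟩
    rw [map_mul, abs_mul, MvPolynomial.eval_X, pow_succ, ← mul_assoc]
    have h1 : |x i| ≤ 1 + ‖x‖ := by
      have := PiLp.norm_apply_le x i
      rw [Real.norm_eq_abs] at this
      linarith
    exact mul_le_mul (h x) h1 (abs_nonneg _) (by positivity)

lemma poly_cont (p : MvPolynomial (Fin d) ℝ) :
    Continuous (fun x : EuclideanSpace ℝ (Fin d) => MvPolynomial.eval (fun i => x i) p) :=
  (MvPolynomial.continuous_eval p).comp (by fun_prop)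

lemma poly_int [IsFiniteMeasure μ] (h : ∀ n : ℕ, Integrable (fun x => ‖x‖^n) μ) (p : MvPolynomial (Fin d) ℝ) :
    Integrable (fun x => MvPolynomial.eval (fun i => x i) p) μ := by
  obtain ⟨C, N, hC, hb⟩ := poly_bound p
  have h1 : Integrable (fun x => C * (1 + ‖x‖)^N) μ := by
    refine Integrable.const_mul ?_ _
    simp only [add_pow, one_pow, one_mul]
    exact integrable_finsetSum _ fun k _ => (h _).mul_const _
  exact h1.mono' (poly_cont p).aestronglyMeasurable (Eventually.of_forall hb)

lemma poly_exp_memLp [IsFiniteMeasure μ] (h : ∀ n : ℕ, Integrable (fun x => ‖x‖^n) μ) (p : MvPolynomial (Fin d) ℝ)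
    {g : EuclideanSpace ℝ (Fin d) → ℝ} (hg : Continuous g) :
    MemLp (fun x => ((MvPolynomial.eval (fun i => x i) p : ℝ) : ℂ) * Complex.exp (g x * Complex.I)) 2 μ := by
  have hc := poly_cont p
  rw [← memLp_norm_iff (by fun_prop), memLp_two_iff_integrable_sq (by fun_prop)]
  have := poly_int h (p*p)
  convert this using 2 with x
  rw [norm_mul, Complex.norm_exp_ofReal_mul_I, mul_one, Complex.norm_real, Real.norm_eq_abs, sq_abs, map_mul, sq]

end

section
variable {n : ℕ} {P Q : Measure (EuclideanSpace ℝ (Fin (n+1)))} [IsProbabilityMeasure P] [IsProbabilityMeasure Q]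

lemma mixed_moments (hP : ∀ n : ℕ, Integrable (fun x => ‖x‖^n) P) (hQ : ∀ n : ℕ, Integrable (fun x => ‖x‖^n) Q)
    (A : Set (EuclideanSpace ℝ (Fin (n+1)))) (hAs : A ⊆ Metric.sphere 0 1) (hpos : μH[(n:ℝ)] A ≠ 0)
    (hA : ∀ v ∈ A, ∀ m : ℕ, ∫ x, ⟪v, x⟫_ℝ^m ∂P = ∫ x, ⟪v, x⟫_ℝ^m ∂Q) (p : MvPolynomial (Fin (n+1)) ℝ) :
    ∫ x, MvPolynomial.eval (fun i => x i) p ∂P = ∫ x, MvPolynomial.eval (fun i => x i) p ∂Q := by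
  have hmi : ∀ (μ : Measure (EuclideanSpace ℝ (Fin (n+1)))) [IsProbabilityMeasure μ],
      (∀ n : ℕ, Integrable (fun x => ‖x‖^n) μ) → ∀ k : Fin (n+1) → ℕ,
      Integrable (fun x => ∏ i, x i ^ k i) μ := by
    intro μ _ h k
    have := poly_int h (∏ i, MvPolynomial.X i ^ k i)
    simpa using this
  set c : (Fin (n+1) → ℕ) → ℝ := fun k => ∫ x, ∏ i, x i ^ k i ∂P - ∫ x, ∏ i, x i ^ k i ∂Q with hc
  have hexp : ∀ (μ : Measure (EuclideanSpace ℝ (Fin (n+1)))) [IsProbabilityMeasure μ],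
      (∀ n : ℕ, Integrable (fun x => ‖x‖^n) μ) → ∀ (m : ℕ) (v : EuclideanSpace ℝ (Fin (n+1))),
      ∫ x, ⟪v, x⟫_ℝ^m ∂μ = ∑ k ∈ Finset.piAntidiag Finset.univ m,
        (Nat.multinomial Finset.univ k * ∫ x, ∏ i, x i ^ k i ∂μ) * ∏ i, v i ^ k i := by
    intro μ _ h m v
    have e : ∀ x : EuclideanSpace ℝ (Fin (n+1)), ⟪v, x⟫_ℝ^m = ∑ k ∈ Finset.piAntidiag Finset.univ m,
        (Nat.multinomial Finset.univ k * ∏ i, v i ^ k i) * ∏ i, x i ^ k i := by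
      intro x
      have : ⟪v, x⟫_ℝ = ∑ i, v i * x i := by
        simp [PiLp.inner_apply, mul_comm]
      rw [this, Finset.sum_pow_eq_sum_piAntidiag]
      refine Finset.sum_congr rfl fun k _ => ?_
      simp only [mul_pow, Finset.prod_mul_distrib]
      ring
    simp only [e]
    rw [integral_finsetSum _ fun k _ => (hmi μ h k).const_mul _]
    refine Finset.sum_congr rfl fun k _ => ?_
    rw [integral_const_mul]
    ring
  set R : ℕ → MvPolynomial (Fin (n+1)) ℝ := fun m => ∑ k ∈ Finset.piAntidiag Finset.univ m,
    MvPolynomial.monomial (Finsupp.equivFunOnFinite.symm k) (Nat.multinomial Finset.univ k * c k) with hR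
  have hReval : ∀ m (v : EuclideanSpace ℝ (Fin (n+1))), MvPolynomial.eval (fun i => v i) (R m) =
      ∫ x, ⟪v, x⟫_ℝ^m ∂P - ∫ x, ⟪v, x⟫_ℝ^m ∂Q := by
    intro m v
    rw [hexp P hP, hexp Q hQ, ← Finset.sum_sub_distrib, hR]
    simp only [map_sum]
    refine Finset.sum_congr rfl fun k _ => ?_
    rw [MvPolynomial.eval_monomial, Finsupp.prod_fintype _ _ (by simp), hc]
    simp
    ring
  have hR0 : ∀ m, R m = 0 := by
    intro m
    by_contra hne
    refine hpos (hausdorff_null (R m) hne m ?_ A hAs ?_)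
    · intro a x
      have h1 := hReval m (WithLp.toLp 2 x)
      have h2 := hReval m (a • WithLp.toLp 2 x)
      simp only [real_inner_smul_left, mul_pow, integral_const_mul] at h2
      rw [← mul_sub, ← h1] at h2
      exact h2
    · intro v hv
      rw [hReval, hA v hv, sub_self]
  have hc0 : ∀ k, c k = 0 := by
    intro k
    have h1 := congrArg (MvPolynomial.coeff (Finsupp.equivFunOnFinite.symm k)) (hR0 (∑ i, k i))
    rw [hR] at h1
    simp only [MvPolynomial.coeff_sum, MvPolynomial.coeff_monomial, MvPolynomial.coeff_zero,
      EmbeddingLike.apply_eq_iff_eq, Finset.sum_ite_eq'] at h1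
    rw [if_pos (by simp)] at h1
    have h2 : (Nat.multinomial Finset.univ k : ℝ) ≠ 0 := by
      exact_mod_cast (Nat.multinomial_pos _ _).ne'
    exact (mul_eq_zero.1 h1).resolve_left h2
  simp only [MvPolynomial.eval_eq']
  rw [integral_finsetSum p.support (fun k _ => (hmi P hP (fun i => k i)).const_mul (MvPolynomial.coeff k p)),
    integral_finsetSum p.support (fun k _ => (hmi Q hQ (fun i => k i)).const_mul (MvPolynomial.coeff k p))]
  refine Finset.sum_congr rfl fun k _ => ?_
  rw [integral_const_mul, integral_const_mul, sub_eq_zero.1 (hc0 k)]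

lemma determinacy (u : Fin (n+1) → EuclideanSpace ℝ (Fin (n+1))) (hu : LinearIndependent ℝ u)
    (A : Set (EuclideanSpace ℝ (Fin (n+1)))) (hAs : A ⊆ Metric.sphere 0 1) (hpos : μH[(n:ℝ)] A ≠ 0)
    (huA : ∀ j, u j ∈ A)
    (hA : ∀ v ∈ A, P.map (fun x => ⟪v, x⟫_ℝ) = Q.map (fun x => ⟪v, x⟫_ℝ))
    (H2 : ∀ j, (∀ m : ℕ,
        Integrable (fun t => |t| ^ m) (P.map (fun x => ⟪u j, x⟫_ℝ))) ∧
      Carleman (P.map (fun x => ⟪u j, x⟫_ℝ))) : P = Q := by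
  have hyP : ∀ j, ∀ m : ℕ, Integrable (fun x => |⟪u j, x⟫_ℝ|^m) P := fun j m =>
    ((H2 j).1 m).comp_measurable (by fun_prop)
  have hyQ : ∀ j, ∀ m : ℕ, Integrable (fun x => |⟪u j, x⟫_ℝ|^m) Q := fun j m => by
    have := (H2 j).1 m
    rw [hA _ (huA j)] at this
    exact this.comp_measurable (by fun_prop)
  have hP := norm_moments hu hyP
  have hQ := norm_moments hu hyQ
  have hpoly := mixed_moments hP hQ A hAs hpos (fun v hv m => by
    have h1 := integral_map (μ := P) (φ := fun x => ⟪v, x⟫_ℝ) (by fun_prop) (f := fun t : ℝ => t^m) (by fun_prop)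
    have h2 := integral_map (μ := Q) (φ := fun x => ⟪v, x⟫_ℝ) (by fun_prop) (f := fun t : ℝ => t^m) (by fun_prop)
    rw [← h1, ← h2, hA v hv])
  have habs : ∀ (μ : Measure (EuclideanSpace ℝ (Fin (n+1)))) j (m : ℕ),
      ∫ t, |t|^m ∂(μ.map (fun x => ⟪u j, x⟫_ℝ)) = ∫ x, |⟪u j, x⟫_ℝ|^m ∂μ := fun μ j m =>
    integral_map (by fun_prop) (by fun_prop)
  have key : ∀ s : Finset (Fin (n+1)), ∀ (c : Fin (n+1) → ℝ) (p : MvPolynomial (Fin (n+1)) ℝ),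
      ∫ x, ((MvPolynomial.eval (fun i => x i) p : ℝ) : ℂ) *
        Complex.exp ((∑ j ∈ s, c j * ⟪u j, x⟫_ℝ : ℝ) * Complex.I) ∂P =
      ∫ x, ((MvPolynomial.eval (fun i => x i) p : ℝ) : ℂ) *
        Complex.exp ((∑ j ∈ s, c j * ⟪u j, x⟫_ℝ : ℝ) * Complex.I) ∂Q := by
    intro s
    induction s using Finset.induction_on with
    | empty =>
      intro c p
      simp only [Finset.sum_empty, Complex.ofReal_zero, zero_mul, Complex.exp_zero, mul_one]
      rw [integral_complex_ofReal, integral_complex_ofReal, hpoly p]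
    | insert k s hk ih =>
      intro c p
      have hg : Continuous (fun x : EuclideanSpace ℝ (Fin (n+1)) => ∑ j ∈ s, c j * ⟪u j, x⟫_ℝ) := by fun_prop
      have hcar := (H2 k).2
      unfold Carleman at hcar
      simp only [habs] at hcar
      have := carleman_step (P := P) (Q := Q) (y := fun x => ⟪u k, x⟫_ℝ)
        (by fun_prop) (hyP k) (hyQ k) (poly_exp_memLp hP p hg) (poly_exp_memLp hQ p hg)
        (fun m => by rw [← habs P, ← habs Q, hA _ (huA k)]) hcar
        (fun m => by
          have h1 := ih c ((∑ i, MvPolynomial.C (u k i) * MvPolynomial.X i)^m * p)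
          have h2 : ∀ x : EuclideanSpace ℝ (Fin (n+1)),
              MvPolynomial.eval (fun i => x i) ((∑ i, MvPolynomial.C (u k i) * MvPolynomial.X i)^m * p)
              = ⟪u k, x⟫_ℝ^m * MvPolynomial.eval (fun i => x i) p := by
            intro x
            simp [PiLp.inner_apply, mul_comm]
          simp only [h2, Complex.ofReal_mul, Complex.ofReal_pow, mul_assoc] at h1
          exact h1) (c k)
      have e : ∀ x : EuclideanSpace ℝ (Fin (n+1)), ((MvPolynomial.eval (fun i => x i) p : ℝ) : ℂ) *
          Complex.exp ((∑ j ∈ insert k s, c j * ⟪u j, x⟫_ℝ : ℝ) * Complex.I) =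
          Complex.exp (c k * (⟪u k, x⟫_ℝ : ℝ) * Complex.I) * (((MvPolynomial.eval (fun i => x i) p : ℝ) : ℂ) *
          Complex.exp ((∑ j ∈ s, c j * ⟪u j, x⟫_ℝ : ℝ) * Complex.I)) := by
        intro x
        rw [Finset.sum_insert hk, Complex.ofReal_add, add_mul, Complex.exp_add, Complex.ofReal_mul]
        ring
      simp only [e]
      exact this
  apply Measure.ext_of_charFun
  ext w
  obtain ⟨c, hc⟩ := exists_coeff hu w
  have h1 := key Finset.univ c 1
  have e : ∀ x, ∑ j, c j * ⟪u j, x⟫_ℝ = ⟪x, w⟫_ℝ := by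
    intro x
    rw [← hc, inner_sum]
    refine Finset.sum_congr rfl fun j _ => ?_
    rw [real_inner_smul_right, real_inner_comm]
  simp only [e, map_one, Complex.ofReal_one, one_mul] at h1
  rw [charFun_apply, charFun_apply]
  exact h1
end

lemma weakTendsto_iff {E : Type*} [MeasurableSpace E] [TopologicalSpace E] [OpensMeasurableSpace E]
    (μ : ℕ → ProbabilityMeasure E) (ν : ProbabilityMeasure E) :
    WeakTendsto (fun n => (μ n : Measure E)) ν ↔ Tendsto μ atTop (𝓝 ν) :=
  ProbabilityMeasure.tendsto_iff_forall_integral_tendsto.symm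

theorem stmt12 (d : ℕ) (hd : 2 ≤ d)
    (Pn : ℕ → Measure (EuclideanSpace ℝ (Fin d)))
    (P : Measure (EuclideanSpace ℝ (Fin d)))
    (hPn : ∀ n, IsProbabilityMeasure (Pn n)) [IsProbabilityMeasure P]
    (A : Set (EuclideanSpace ℝ (Fin d))) (hA : MeasurableSet A)
    (hAs : A ⊆ Metric.sphere (0 : EuclideanSpace ℝ (Fin d)) 1)
    (hApos : 0 < μH[(d : ℝ) - 1] A)
    (u : Fin d → EuclideanSpace ℝ (Fin d)) (huA : ∀ j, u j ∈ A)
    (hu : LinearIndependent ℝ u)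
    (H1 : ∀ v ∈ A, WeakTendsto (fun n => (Pn n).map (fun x => ⟪v, x⟫_ℝ))
      (P.map (fun x => ⟪v, x⟫_ℝ)))
    (H2 : ∀ j, (∀ m : ℕ,
        Integrable (fun t => |t| ^ m) (P.map (fun x => ⟪u j, x⟫_ℝ))) ∧
      Carleman (P.map (fun x => ⟪u j, x⟫_ℝ))) :
    WeakTendsto Pn P := by
  obtain ⟨n, rfl⟩ : ∃ n, d = n+1 := ⟨d-1, by omega⟩
  set μ : ℕ → ProbabilityMeasure (EuclideanSpace ℝ (Fin (n+1))) := fun k => ⟨Pn k, hPn k⟩ with hμ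
  set ν : ProbabilityMeasure (EuclideanSpace ℝ (Fin (n+1))) := ⟨P, inferInstance⟩ with hν
  have hcont : ∀ v : EuclideanSpace ℝ (Fin (n+1)), Continuous (fun x => ⟪v, x⟫_ℝ) := fun v => by fun_prop
  have hmap : ∀ v ∈ A, Tendsto (fun k => (μ k).map (hcont v).measurable.aemeasurable) atTop
      (𝓝 (ν.map (hcont v).measurable.aemeasurable)) := by
    intro v hv
    rw [← weakTendsto_iff]
    exact H1 v hv
  refine (weakTendsto_iff μ ν).2 ?_
  have htight1 : ∀ j, IsTightMeasureSet {((ρ : ProbabilityMeasure ℝ) : Measure ℝ) |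
      ρ ∈ Set.range (fun k => (μ k).map (hcont (u j)).measurable.aemeasurable)} := by
    intro j
    apply isTightMeasureSet_of_isCompact_closure
    exact (hmap _ (huA j)).isCompact_insert_range.closure_of_subset (Set.subset_insert _ _)
  have htight : IsTightMeasureSet {((ρ : ProbabilityMeasure _) : Measure (EuclideanSpace ℝ (Fin (n+1)))) | ρ ∈ Set.range μ} := by
    rw [isTightMeasureSet_iff_exists_isCompact_measure_compl_le]
    intro ε hε
    have h1 : ∀ j, ∃ K : Set ℝ, IsCompact K ∧ ∀ k, Pn k ((fun x => ⟪u j, x⟫_ℝ) ⁻¹' Kᶜ) ≤ ε / (n+1 : ℕ) := by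
      intro j
      obtain ⟨K, hK, h⟩ := isTightMeasureSet_iff_exists_isCompact_measure_compl_le.1 (htight1 j)
        (ε / (n+1 : ℕ)) (ENNReal.div_pos hε.ne' (by simp))
      refine ⟨K, hK, fun k => ?_⟩
      have := h _ ⟨_, ⟨k, rfl⟩, rfl⟩
      rw [ProbabilityMeasure.toMeasure_map, Measure.map_apply (hcont _).measurable hK.measurableSet.compl] at this
      exact this
    choose K hK hKb using h1
    have hemb := (coordMap u).isClosedEmbedding_of_injective (coordMap_ker hu)
    refine ⟨coordMap u ⁻¹' (Set.univ.pi K), hemb.isCompact_preimage (isCompact_univ_pi hK), ?_⟩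
    rintro _ ⟨_, ⟨k, rfl⟩, rfl⟩
    have hsub : (coordMap u ⁻¹' (Set.univ.pi K))ᶜ ⊆ ⋃ j, (fun x => ⟪u j, x⟫_ℝ) ⁻¹' (K j)ᶜ := by
      intro x hx
      simp only [Set.mem_compl_iff, Set.mem_preimage, Set.mem_univ_pi, not_forall] at hx
      obtain ⟨j, hj⟩ := hx
      exact Set.mem_iUnion.2 ⟨j, hj⟩
    calc Pn k _ ≤ Pn k (⋃ j, (fun x => ⟪u j, x⟫_ℝ) ⁻¹' (K j)ᶜ) := measure_mono hsub
      _ ≤ ∑ j, Pn k ((fun x => ⟪u j, x⟫_ℝ) ⁻¹' (K j)ᶜ) := measure_iUnion_fintype_le _ _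
      _ ≤ ∑ j : Fin (n+1), ε / (n+1 : ℕ) := Finset.sum_le_sum fun j _ => hKb j k
      _ = ε := by
        rw [Finset.sum_const, Finset.card_univ, Fintype.card_fin, nsmul_eq_mul]
        exact ENNReal.mul_div_cancel (by simp) (by simp)
  refine (isCompact_closure_of_isTightMeasureSet htight).tendsto_nhds_of_unique_mapClusterPt
    (Eventually.of_forall fun k => subset_closure ⟨k, rfl⟩) fun ρ _ hρ => ?_
  have hpe : ∀ v ∈ A, P.map (fun x => ⟪v, x⟫_ℝ) = (ρ : Measure _).map (fun x => ⟪v, x⟫_ℝ) := by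
    intro v hv
    have hc : Continuous (fun ρ : ProbabilityMeasure (EuclideanSpace ℝ (Fin (n+1))) =>
        ρ.map (hcont v).measurable.aemeasurable) := ProbabilityMeasure.continuous_map (hcont v)
    have h1 := hρ.continuousAt_comp hc.continuousAt
    have h2 : ρ.map (hcont v).measurable.aemeasurable = ν.map (hcont v).measurable.aemeasurable := by
      have h3 := h1.clusterPt
      have h4 := ClusterPt.mono h3 (hmap v hv)
      exact eq_of_nhds_neBot h4
    exact (congrArg (fun r : ProbabilityMeasure ℝ => (r : Measure ℝ)) h2).symm
  have := determinacy (P := P) (Q := (ρ : Measure _)) u hu A hAs (by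
    have : ((n+1 : ℕ) : ℝ) - 1 = n := by push_cast; ring
    rw [this] at hApos
    exact hApos.ne') huA hpe H2
  exact Subtype.ext this.symm
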